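/- arXiv:2106.00315 — 3 statements merged into one kernel-verified Lean document; each statement's English description precedes it below -/
import Mathlib

section
/- Let A be a trim DFA over an ordered alphabet (Σ,≺) with n states, initial state q₀, and let L = L(A). Then L is NOT Wheeler with respect to (Σ,≺) if and only if there exist words μ, ν, γ ∈ Σ* such that γ is not a suffix of μ and not a suffix of ν, and: (1) μ and ν label paths from q₀ to states u and v respectively with μ ≢_L ν; (2) γ labels a cycle starting and ending at u and a cycle starting and ending at v; (3) either both μ ≺ γ and ν ≺ γ, or both γ ≺ μ and γ ≺ ν. Moreover, when such words exist, they can be chosen with |μ| ≤ |γ|, |ν| ≤ |γ| and |γ| ≤ n³ + 2n² + n + 2. -/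
/-!
Common framework: words over an ordered alphabet, co-lexicographic order,
(partial) DFAs and NFAs, Wheeler automata and Wheeler languages,
following "Ordering regular languages: a danger zone".
-/

namespace WheelerPaper

/-- Strict co-lexicographic order on words: compare the reverses lexicographically. -/
def Colex {A : Type} [LinearOrder A] (x y : List A) : Prop :=
  List.Lex (· < ·) x.reverse y.reverse

/-- Non-strict co-lexicographic order. -/
def ColexLE {A : Type} [LinearOrder A] (x y : List A) : Prop :=
  Colex x y ∨ x = y

/-- Right context `α⁻¹L` of a word `α` with respect to a language `L`. -/
def rc {A : Type} (L : Set (List A)) (α : List A) : Set (List A) :=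
  {γ | α ++ γ ∈ L}

/-- `Pref L`: the set of prefixes of words of `L`. -/
def Pref {A : Type} (L : Set (List A)) : Set (List A) :=
  {α | ∃ β, α ++ β ∈ L}

/-- `wpow γ i` is `γ^i`, the `i`-fold concatenation of the word `γ`. -/
def wpow {A : Type} (γ : List A) : ℕ → List A
  | 0 => []
  | n + 1 => γ ++ wpow γ n

/-- A DFA with a possibly partial transition function. -/
structure PDFA (A : Type) (Q : Type) where
  init : Q
  trans : Q → A → Option Q
  accept : Q → Prop

/-- Extended (partial) transition function of a `PDFA`. -/
def PDFA.evalFrom {A Q : Type} (M : PDFA A Q) : Q → List A → Option Q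
  | q, [] => some q
  | q, a :: w => (M.trans q a).bind fun q' => PDFA.evalFrom M q' w

/-- The language accepted by a `PDFA`. -/
def PDFA.accepts {A Q : Type} (M : PDFA A Q) : Set (List A) :=
  {w | ∃ q, M.evalFrom M.init w = some q ∧ M.accept q}

/-- A `PDFA` is trim if every state is reachable from the initial state and
every state can reach some accepting state. -/
def PDFA.Trim {A Q : Type} (M : PDFA A Q) : Prop :=
  (∀ q : Q, ∃ α, M.evalFrom M.init α = some q) ∧
  (∀ q : Q, ∃ α q', M.evalFrom q α = some q' ∧ M.accept q')

/-- `r` is a Wheeler order for the DFA `M`: a strict total order on states whose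
minimum is the initial state, the initial state has no incoming transitions, and
the two Wheeler conditions hold. -/
def IsWheelerOrder {A Q : Type} [LinearOrder A] (M : PDFA A Q) (r : Q → Q → Prop) : Prop :=
  IsStrictTotalOrder Q r ∧
  (∀ q : Q, q ≠ M.init → r M.init q) ∧
  (∀ (q : Q) (a : A), M.trans q a ≠ some M.init) ∧
  (∀ (u₁ : Q) (a₁ : A) (v₁ : Q) (u₂ : Q) (a₂ : A) (v₂ : Q),
     M.trans u₁ a₁ = some v₁ → M.trans u₂ a₂ = some v₂ →
     (a₁ < a₂ → r v₁ v₂) ∧ (a₁ = a₂ → r u₁ u₂ → (r v₁ v₂ ∨ v₁ = v₂)))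

/-- A language is Wheeler (w.r.t. the given order on the alphabet) if it is
recognized by some Wheeler DFA. -/
def IsWheelerLang {A : Type} [LinearOrder A] (L : Set (List A)) : Prop :=
  ∃ (n : ℕ) (M : PDFA A (Fin n)) (r : Fin n → Fin n → Prop),
    IsWheelerOrder M r ∧ M.accepts = L

/-- A language is regular if it is recognized by some finite-state (partial) DFA. -/
def IsRegular {A : Type} (L : Set (List A)) : Prop :=
  ∃ (k : ℕ) (M : PDFA A (Fin k)), M.accepts = L

/-- The input-consistent convex refinement `≡^c_L` of the Myhill–Nerode
equivalence: same right context, same last character (or both empty), and every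
word of `Pref L` co-lexicographically between the two words has the same right
context. -/
def EquivC {A : Type} [LinearOrder A] (L : Set (List A)) (α β : List A) : Prop :=
  rc L α = rc L β ∧ α.getLast? = β.getLast? ∧
  ∀ γ ∈ Pref L,
    ((ColexLE α γ ∧ ColexLE γ β) ∨ (ColexLE β γ ∧ ColexLE γ α)) →
    rc L γ = rc L α

/-- An NFA with a single initial state. -/
structure NFA' (A : Type) (Q : Type) where
  init : Q
  trans : Q → A → Set Q
  accept : Q → Prop

/-- One step of an `NFA'` on a set of states. -/
def NFA'.stepSet {A Q : Type} (M : NFA' A Q) (S : Set Q) (a : A) : Set Q :=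
  {q | ∃ p ∈ S, q ∈ M.trans p a}

/-- Extended transition function of an `NFA'` on sets of states. -/
def NFA'.evalFrom {A Q : Type} (M : NFA' A Q) : Set Q → List A → Set Q
  | S, [] => S
  | S, a :: w => NFA'.evalFrom M (M.stepSet S a) w

/-- The language accepted by an `NFA'`. -/
def NFA'.accepts {A Q : Type} (M : NFA' A Q) : Set (List A) :=
  {w | ∃ q ∈ M.evalFrom {M.init} w, M.accept q}

/-- An `NFA'` is trim if every state is reachable from the initial state and
every state can reach some accepting state. -/
def NFA'.Trim {A Q : Type} (M : NFA' A Q) : Prop :=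
  (∀ q : Q, ∃ α, q ∈ M.evalFrom {M.init} α) ∧
  (∀ q : Q, ∃ α, ∃ q' ∈ M.evalFrom {q} α, M.accept q')

/-- `r` is a Wheeler order for the NFA `M`. -/
def IsWheelerNFAOrder {A Q : Type} [LinearOrder A] (M : NFA' A Q) (r : Q → Q → Prop) : Prop :=
  IsStrictTotalOrder Q r ∧
  (∀ q : Q, q ≠ M.init → r M.init q) ∧
  (∀ (q : Q) (a : A), M.init ∉ M.trans q a) ∧
  (∀ (u₁ : Q) (a₁ : A) (v₁ : Q) (u₂ : Q) (a₂ : A) (v₂ : Q),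
     v₁ ∈ M.trans u₁ a₁ → v₂ ∈ M.trans u₂ a₂ →
     (a₁ < a₂ → r v₁ v₂) ∧ (a₁ = a₂ → r u₁ u₂ → (r v₁ v₂ ∨ v₁ = v₂)))

/-- `I` is an interval with respect to the strict order `r`. -/
def IsIntervalRel {Q : Type} (r : Q → Q → Prop) (I : Set Q) : Prop :=
  ∀ x y z : Q, (r x y ∨ x = y) → (r y z ∨ y = z) → x ∈ I → z ∈ I → y ∈ I

/-- The class of star-free languages: built from `∅`, `{ε}` and the singletons
`{a}` by union, concatenation and complement. -/
inductive StarFree {A : Type} : Set (List A) → Prop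
  | empty : StarFree ∅
  | eps : StarFree {[]}
  | single (a : A) : StarFree {[a]}
  | union {L₁ L₂ : Set (List A)} : StarFree L₁ → StarFree L₂ → StarFree (L₁ ∪ L₂)
  | concat {L₁ L₂ : Set (List A)} : StarFree L₁ → StarFree L₂ →
      StarFree {w | ∃ u v, u ∈ L₁ ∧ v ∈ L₂ ∧ w = u ++ v}
  | compl {L : Set (List A)} : StarFree L → StarFree Lᶜ


/-- The language of all words over the sub-alphabet `S`. -/
def wordsOver {A : Type} (S : Set A) : Language A := {w | ∀ x ∈ w, x ∈ S}


/-! ## Order lemmas -/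

section Helpers

theorem colex_iff {A : Type} [LinearOrder A] {x y : List A} :
    Colex x y ↔ x.reverse < y.reverse := Iff.rfl

theorem colexLE_iff {A : Type} [LinearOrder A] {x y : List A} :
    ColexLE x y ↔ x.reverse ≤ y.reverse := by
  unfold ColexLE
  rw [colex_iff, le_iff_lt_or_eq, List.reverse_inj]

theorem colex_trans {A : Type} [LinearOrder A] {x y z : List A}
    (h : Colex x y) (h' : Colex y z) : Colex x z := by
  rw [colex_iff] at *; exact lt_trans h h'

theorem colex_irrefl {A : Type} [LinearOrder A] {x : List A} (h : Colex x x) : False := by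
  rw [colex_iff] at h; exact lt_irrefl _ h

theorem colex_total {A : Type} [LinearOrder A] {x y : List A} (h : x ≠ y) :
    Colex x y ∨ Colex y x := by
  rw [colex_iff, colex_iff]
  exact lt_or_gt_of_ne (by simpa using h)

theorem append_left_lt_iff {A : Type} [LinearOrder A] (w x y : List A) :
    w ++ x < w ++ y ↔ x < y := by
  induction w with
  | nil => simp
  | cons a w ih => simp [ih]

theorem colex_append_iff {A : Type} [LinearOrder A] (x y w : List A) :
    Colex (x ++ w) (y ++ w) ↔ Colex x y := by
  rw [colex_iff, colex_iff, List.reverse_append, List.reverse_append, append_left_lt_iff]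

theorem lt_append_of_lt {A : Type} [LinearOrder A] {l g : List A} (m : List A) (h : l < g) :
    l < g ++ m := by
  induction l generalizing g with
  | nil =>
    cases g with
    | nil => exact absurd h (lt_irrefl _)
    | cons b g => exact List.nil_lt_cons _ _
  | cons a l ih =>
    cases g with
    | nil => exact absurd h (List.not_lt_nil _)
    | cons b g =>
      rw [List.cons_append, List.cons_lt_cons_iff]
      rw [List.cons_lt_cons_iff] at h
      exact h.imp id (fun h => ⟨h.1, ih h.2⟩)

theorem append_lt_of_lt {A : Type} [LinearOrder A] {l g : List A} (m : List A) (h : g < l)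
    (hp : ¬ g <+: l) : g ++ m < l := by
  induction g generalizing l with
  | nil => exact absurd (List.nil_prefix) hp
  | cons b g ih =>
    cases l with
    | nil => exact absurd h (List.not_lt_nil _)
    | cons a l =>
      rw [List.cons_append, List.cons_lt_cons_iff]
      rw [List.cons_lt_cons_iff] at h
      refine h.imp id (fun h => ⟨h.1, ih h.2 ?_⟩)
      intro hh
      exact hp (by rw [h.1]; exact (List.prefix_cons_inj a).2 hh)

theorem colex_append_of_colex {A : Type} [LinearOrder A] {ν γ : List A} (μ : List A)
    (h : Colex ν γ) : Colex ν (μ ++ γ) := by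
  rw [colex_iff] at *
  rw [List.reverse_append]
  exact lt_append_of_lt _ h

theorem append_colex_of_colex {A : Type} [LinearOrder A] {ν γ : List A} (μ : List A)
    (h : Colex γ ν) (hs : ¬ γ <:+ ν) : Colex (μ ++ γ) ν := by
  rw [colex_iff] at *
  rw [List.reverse_append]
  exact append_lt_of_lt _ h (by rwa [List.reverse_prefix])

theorem head_lt {A : Type} [LinearOrder A] {x y x' y' : List A} (h : x < y)
    (hne : x.head? ≠ y.head?) (hx : x'.head? = x.head?) (hy : y'.head? = y.head?) : x' < y' := by
  cases x <;> cases y <;> cases x' <;> cases y' <;>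
    simp_all [List.cons_lt_cons_iff]

theorem colex_of_last {A : Type} [LinearOrder A] {x y x' y' : List A} (h : Colex x y)
    (hne : x.getLast? ≠ y.getLast?) (hx : x'.getLast? = x.getLast?)
    (hy : y'.getLast? = y.getLast?) : Colex x' y' := by
  rw [colex_iff] at *
  apply head_lt h <;> simpa

/-- words between two words with a common prefix share it -/
theorem prefix_between {A : Type} [LinearOrder A] (w : List A) {x y m : List A}
    (h1 : w ++ x < m) (h2 : m < w ++ y) : ∃ z, m = w ++ z := by
  induction w generalizing m with
  | nil => exact ⟨m, rfl⟩
  | cons a w ih =>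
    cases m with
    | nil => exact absurd h1 (List.not_lt_nil _)
    | cons b m =>
      rw [List.cons_append, List.cons_lt_cons_iff] at h1 h2
      have hab : a = b := by
        rcases h1 with h1 | h1 <;> rcases h2 with h2 | h2
        · exact absurd h1 (lt_asymm h2)
        · exact h2.1.symm
        · exact h1.1
        · exact h1.1
      subst hab
      obtain ⟨z, rfl⟩ := ih (m := m) (by simpa using h1) (by simpa using h2)
      exact ⟨z, rfl⟩

theorem head_between {A : Type} [LinearOrder A] {x y m : List A}
    (h1 : x ≤ m) (h2 : m ≤ y) (h : x.head? = y.head?) : m.head? = y.head? := by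
  rcases h1.eq_or_lt with rfl | h1
  · exact h
  rcases h2.eq_or_lt with rfl | h2
  · rfl
  cases y with
  | nil => exact absurd h2 (List.not_lt_nil _)
  | cons a y =>
    cases x with
    | nil => simp at h
    | cons b x =>
      obtain rfl : b = a := by simpa using h
      obtain ⟨z, rfl⟩ := prefix_between [b] (x := x) (y := y) h1 h2
      rfl

/-! ## Automata lemmas -/

theorem evalFrom_append {A Q : Type} (M : PDFA A Q) (q : Q) (x y : List A) :
    M.evalFrom q (x ++ y) = (M.evalFrom q x).bind fun q' => M.evalFrom q' y := by
  induction x generalizing q with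
  | nil => simp [PDFA.evalFrom]
  | cons a x ih =>
    simp only [List.cons_append, PDFA.evalFrom, Option.bind_assoc]
    congr 1
    funext q'
    exact ih q'

theorem evalFrom_append_some {A Q : Type} (M : PDFA A Q) (q r : Q) (x y : List A) :
    M.evalFrom q (x ++ y) = some r ↔ ∃ p, M.evalFrom q x = some p ∧ M.evalFrom p y = some r := by
  rw [evalFrom_append, Option.bind_eq_some_iff]

theorem evalFrom_single {A Q : Type} (M : PDFA A Q) (q : Q) (a : A) :
    M.evalFrom q [a] = M.trans q a := by
  simp [PDFA.evalFrom]

theorem evalFrom_wpow {A Q : Type} (M : PDFA A Q) (q : Q) (γ : List A)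
    (h : M.evalFrom q γ = some q) (k : ℕ) : M.evalFrom q (wpow γ k) = some q := by
  induction k with
  | zero => rfl
  | succ k ih => exact (evalFrom_append_some ..).2 ⟨q, h, ih⟩

theorem length_wpow {A : Type} (γ : List A) (k : ℕ) : (wpow γ k).length = k * γ.length := by
  induction k with
  | zero => simp [wpow]
  | succ k ih => simp [wpow, ih]; ring

theorem rc_eq_of_eval {A Q : Type} (M : PDFA A Q) {α β : List A} 
    (h : M.evalFrom M.init α = M.evalFrom M.init β) : rc M.accepts α = rc M.accepts β := by
  ext γ
  simp only [rc, PDFA.accepts, Set.mem_ofPred_eq, evalFrom_append, h]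

theorem rc_append {A : Type} {L : Set (List A)} {α β : List A} (h : rc L α = rc L β)
    (γ : List A) : rc L (α ++ γ) = rc L (β ++ γ) := by
  ext δ
  have := Set.ext_iff.1 h (γ ++ δ)
  simpa [rc] using this

theorem pref_iff_rc {A : Type} {L : Set (List A)} {α : List A} :
    α ∈ Pref L ↔ (rc L α).Nonempty := Iff.rfl

theorem pref_of_append {A : Type} {L : Set (List A)} {α β : List A} (h : α ++ β ∈ Pref L) :
    α ∈ Pref L := by
  obtain ⟨γ, h⟩ := h
  exact ⟨β ++ γ, by simpa using h⟩

theorem eval_of_pref {A Q : Type} (M : PDFA A Q) {α : List A} (h : α ∈ Pref M.accepts) :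
    ∃ q, M.evalFrom M.init α = some q := by
  obtain ⟨β, q, hq, -⟩ := h
  obtain ⟨p, hp, -⟩ := (evalFrom_append_some ..).1 hq
  exact ⟨p, hp⟩

theorem pref_of_eval {A Q : Type} (M : PDFA A Q) (ht : M.Trim) {α : List A} {q : Q}
    (h : M.evalFrom M.init α = some q) : α ∈ Pref M.accepts := by
  obtain ⟨β, q', h1, h2⟩ := ht.2 q
  exact ⟨β, q', (evalFrom_append_some ..).2 ⟨q, h, h1⟩, h2⟩

/-- Finding a loop early in a long run. -/
theorem exists_loop {A Q : Type} [Fintype Q] (M : PDFA A Q) {q q' : Q} {s : List A}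
    (h : M.evalFrom q s = some q') (hs : Fintype.card Q ≤ s.length) :
    ∃ w δ t r, s = w ++ δ ++ t ∧ δ ≠ [] ∧ w.length + δ.length ≤ Fintype.card Q ∧
      M.evalFrom q w = some r ∧ M.evalFrom r δ = some r ∧ M.evalFrom r t = some q' := by
  have hex : ∀ i : ℕ, ∃ r, M.evalFrom q (s.take i) = some r ∧
      M.evalFrom r (s.drop i) = some q' := by
    intro i
    apply (evalFrom_append_some ..).1
    rwa [List.take_append_drop]
  choose f hf hf' using hex
  obtain ⟨x, y, hne, hxy⟩ := Fintype.exists_ne_map_eq_of_card_lt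
    (fun i : Fin (Fintype.card Q + 1) => f i) (by simp)
  have key : ∀ i j : ℕ, i < j → j ≤ Fintype.card Q → f i = f j →
    ∃ w δ t r, s = w ++ δ ++ t ∧ δ ≠ [] ∧ w.length + δ.length ≤ Fintype.card Q ∧
      M.evalFrom q w = some r ∧ M.evalFrom r δ = some r ∧ M.evalFrom r t = some q' := by
    intro i j hij hj hfe
    have e : s.take j = s.take i ++ (s.take j).drop i := by
      conv_lhs => rw [← List.take_append_drop i (s.take j)]
      rw [List.take_take, min_eq_left hij.le]
    refine ⟨s.take i, (s.take j).drop i, s.drop j, f i, ?_, ?_, ?_, hf i, ?_, ?_⟩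
    · rw [← e, List.take_append_drop]
    · intro h0
      have := congrArg List.length h0
      simp at this
      omega
    · simp
      omega
    · have h2 := hf j
      rw [e] at h2
      obtain ⟨p, hp, hp'⟩ := (evalFrom_append_some ..).1 h2
      rw [hf i] at hp
      cases hp
      rw [hp', hfe]
    · rw [hfe]; exact hf' j
  have hne' : (x : ℕ) ≠ y := fun h => hne (Fin.ext h)
  rcases lt_or_gt_of_ne hne' with hlt | hlt
  · exact key x y hlt (by omega) hxy
  · exact key y x hlt (by omega) hxy.symm

/-- Shortening a word, keeping its final letter. -/
theorem exists_short {A Q : Type} [Fintype Q] (M : PDFA A Q) {q q' : Q} (s : List A)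
    (h : M.evalFrom q s = some q') :
    ∃ s', M.evalFrom q s' = some q' ∧ s'.getLast? = s.getLast? ∧ s'.length ≤ Fintype.card Q := by
  induction hn : s.length using Nat.strong_induction_on generalizing s with
  | _ N ih =>
    by_cases hs : s.length ≤ Fintype.card Q
    · exact ⟨s, h, rfl, hs⟩
    push Not at hs
    obtain ⟨w, δ, t, r, rfl, hδ, hle, h1, h2, h3⟩ := exists_loop M h hs.le
    have ht : t ≠ [] := by
      rintro rfl
      simp at hs; omega
    have hδ' := List.length_pos_iff.2 hδ
    obtain ⟨s', e1, e2, e3⟩ := ih (w ++ t).length (by simp at hn ⊢; omega) (w ++ t)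
      ((evalFrom_append_some ..).2 ⟨r, h1, h3⟩) rfl
    refine ⟨s', e1, ?_, e3⟩
    rw [e2, List.getLast?_append_of_ne_nil _ ht, List.getLast?_append_of_ne_nil _ ht]

/-- Product automaton (acceptance is irrelevant). -/
def prodDFA {A Q R : Type} (M : PDFA A Q) (N : PDFA A R) : PDFA A (Q × R) where
  init := (M.init, N.init)
  trans := fun p a => (M.trans p.1 a).bind fun x => (N.trans p.2 a).map fun y => (x, y)
  accept := fun _ => True

theorem prod_eval {A Q R : Type} (M : PDFA A Q) (N : PDFA A R) (q q' : Q) (r r' : R)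
    (s : List A) : (prodDFA M N).evalFrom (q, r) s = some (q', r') ↔
      M.evalFrom q s = some q' ∧ N.evalFrom r s = some r' := by
  induction s generalizing q r with
  | nil => simp [PDFA.evalFrom]
  | cons a s ih =>
    simp only [PDFA.evalFrom, prodDFA, Option.bind_eq_some_iff, Option.map_eq_some_iff]
    constructor
    · rintro ⟨p, ⟨x, hx, y, hy, rfl⟩, h⟩
      have := (ih x y).1 h
      exact ⟨⟨x, hx, this.1⟩, ⟨y, hy, this.2⟩⟩
    · rintro ⟨⟨x, hx, h1⟩, ⟨y, hy, h2⟩⟩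
      exact ⟨(x, y), ⟨x, hx, y, hy, rfl⟩, (ih x y).2 ⟨h1, h2⟩⟩

end Helpers

section Helpers2

theorem max_suffix_two {A : Type} (x y : List A) (h : x ≠ y) :
    ∃ x' y' s, x = x' ++ s ∧ y = y' ++ s ∧ x'.getLast? ≠ y'.getLast? := by
  induction x using List.reverseRecOn generalizing y with
  | nil =>
    refine ⟨[], y, [], by simp, by simp, ?_⟩
    intro h0
    exact h (List.getLast?_eq_none_iff.1 h0.symm).symm
  | append_singleton x a ih =>
    by_cases hl : (x ++ [a]).getLast? = y.getLast?
    · induction y using List.reverseRecOn with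
      | nil => simp at hl
      | append_singleton y b _ =>
        obtain rfl : a = b := by simpa using hl
        obtain ⟨x', y', s, rfl, rfl, h'⟩ := ih y (by rintro rfl; exact h rfl)
        exact ⟨x', y', s ++ [a], by simp, by simp, h'⟩
    · exact ⟨x ++ [a], y, [], by simp, by simp, hl⟩

theorem max_suffix_three {A : Type} (x y z : List A) (h : x ≠ y) :
    ∃ x' y' z' s, x = x' ++ s ∧ y = y' ++ s ∧ z = z' ++ s ∧
      (x'.getLast? ≠ y'.getLast? ∨ y'.getLast? ≠ z'.getLast?) := by
  induction x using List.reverseRecOn generalizing y z with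
  | nil =>
    refine ⟨[], y, z, [], by simp, by simp, by simp, Or.inl ?_⟩
    intro h0
    exact h (List.getLast?_eq_none_iff.1 h0.symm).symm
  | append_singleton x a ih =>
    by_cases hl : (x ++ [a]).getLast? ≠ y.getLast? ∨ y.getLast? ≠ z.getLast?
    · exact ⟨x ++ [a], y, z, [], by simp, by simp, by simp, hl⟩
    · push Not at hl
      obtain ⟨hl, hl'⟩ := hl
      induction y using List.reverseRecOn with
      | nil => simp at hl
      | append_singleton y b _ =>
        obtain rfl : a = b := by simpa using hl
        induction z using List.reverseRecOn with
        | nil => simp at hl'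
        | append_singleton z c _ =>
          obtain rfl : a = c := by simpa using hl'
          obtain ⟨x', y', z', s, rfl, rfl, rfl, h'⟩ := ih y z (by rintro rfl; exact h rfl)
          exact ⟨x', y', z', s ++ [a], by simp, by simp, by simp, h'⟩

/-- Shortening an ordered pair of words. -/
theorem short_pair {A : Type} [LinearOrder A] {n : ℕ} (M : PDFA A (Fin n)) {α β : List A}
    {p q : Fin n} (hα : M.evalFrom M.init α = some p) (hβ : M.evalFrom M.init β = some q)
    (hlt : Colex α β) :
    ∃ α' β', M.evalFrom M.init α' = some p ∧ M.evalFrom M.init β' = some q ∧ Colex α' β' ∧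
      α'.getLast? = α.getLast? ∧ β'.getLast? = β.getLast? ∧
      α'.length ≤ n ^ 2 + n ∧ β'.length ≤ n ^ 2 + n := by
  obtain ⟨x, y, s, rfl, rfl, hne⟩ := max_suffix_two α β
    (by rintro rfl; exact colex_irrefl hlt)
  rw [colex_append_iff] at hlt
  obtain ⟨p0, hx, hxs⟩ := (evalFrom_append_some ..).1 hα
  obtain ⟨q0, hy, hys⟩ := (evalFrom_append_some ..).1 hβ
  obtain ⟨x', hx1, hx2, hx3⟩ := exists_short M x hx
  obtain ⟨y', hy1, hy2, hy3⟩ := exists_short M y hy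
  obtain ⟨s', hs1, hs2, hs3⟩ := exists_short (prodDFA M M) s ((prod_eval ..).2 ⟨hxs, hys⟩)
  rw [prod_eval] at hs1
  simp at hx3 hy3 hs3
  refine ⟨x' ++ s', y' ++ s', (evalFrom_append_some ..).2 ⟨_, hx1, hs1.1⟩,
    (evalFrom_append_some ..).2 ⟨_, hy1, hs1.2⟩, ?_, ?_, ?_, ?_, ?_⟩
  · rw [colex_append_iff]
    exact colex_of_last hlt hne hx2 hy2
  · simp [List.getLast?_append, hx2, hs2]
  · simp [List.getLast?_append, hy2, hs2]
  · simp; nlinarith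
  · simp; nlinarith

/-- Shortening an ordered triple of words. -/
theorem short_triple {A : Type} [LinearOrder A] {n : ℕ} (M : PDFA A (Fin n)) {x y z : List A}
    {p q r : Fin n} (hx : M.evalFrom M.init x = some p) (hy : M.evalFrom M.init y = some q)
    (hz : M.evalFrom M.init z = some r) (hxy : Colex x y) (hyz : Colex y z)
    (hne : x.getLast? ≠ y.getLast? ∨ y.getLast? ≠ z.getLast?) :
    ∃ x' y' z', M.evalFrom M.init x' = some p ∧ M.evalFrom M.init y' = some q ∧
      M.evalFrom M.init z' = some r ∧ Colex x' y' ∧ Colex y' z' ∧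
      x'.length ≤ n ^ 2 + n ∧ y'.length ≤ n ^ 2 + n ∧ z'.length ≤ n ^ 2 + n := by
  rcases hne with hne | hne
  · obtain ⟨x', hx1, hx2, hx3⟩ := exists_short M x hx
    obtain ⟨y', z', h1, h2, h3, h4, h5, h6, h7⟩ := short_pair M hy hz hyz
    simp at hx3
    exact ⟨x', y', z', hx1, h1, h2, colex_of_last hxy hne hx2 h4, h3, by nlinarith, h6, h7⟩
  · obtain ⟨z', hz1, hz2, hz3⟩ := exists_short M z hz
    obtain ⟨x', y', h1, h2, h3, h4, h5, h6, h7⟩ := short_pair M hx hy hxy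
    simp at hz3
    exact ⟨x', y', z', h1, h2, hz1, h3, colex_of_last hyz hne h5 hz2, h6, h7, by nlinarith⟩

/-- From an ordered triple with a long common suffix to bounded witnesses. -/
theorem witness_of_triple {A : Type} [LinearOrder A] {n : ℕ}
    (M : PDFA A (Fin n)) (x y z w : List A) (p q r : Fin n)
    (hw : n ^ 3 ≤ w.length)
    (hx : M.evalFrom M.init (x ++ w) = some p) (hy : M.evalFrom M.init (y ++ w) = some q)
    (hz : M.evalFrom M.init (z ++ w) = some r) (hxy : Colex x y) (hyz : Colex y z)
    (h1 : rc M.accepts (x ++ w) ≠ rc M.accepts (y ++ w))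
    (h2 : rc M.accepts (y ++ w) ≠ rc M.accepts (z ++ w)) :
    ∃ (μ ν γ : List A) (u v : Fin n),
        ¬ γ <:+ μ ∧ ¬ γ <:+ ν ∧
        M.evalFrom M.init μ = some u ∧ M.evalFrom M.init ν = some v ∧
        rc M.accepts μ ≠ rc M.accepts ν ∧
        M.evalFrom u γ = some u ∧ M.evalFrom v γ = some v ∧
        ((Colex μ γ ∧ Colex ν γ) ∨ (Colex γ μ ∧ Colex γ ν)) ∧
        μ.length ≤ γ.length ∧ ν.length ≤ γ.length ∧
        γ.length ≤ n ^ 3 + 2 * n ^ 2 + n + 2 := by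
  -- make the common suffix maximal
  obtain ⟨x, y, z, s, rfl, rfl, rfl, hne⟩ := max_suffix_three x y z
    (by rintro rfl; exact h1 rfl)
  rw [colex_append_iff] at hxy hyz
  simp only [List.append_assoc] at *
  have hW : n ^ 3 ≤ (s ++ w).length := by simp; omega
  generalize s ++ w = W at *
  obtain ⟨p0, hx0, hxW⟩ := (evalFrom_append_some ..).1 hx
  obtain ⟨q0, hy0, hyW⟩ := (evalFrom_append_some ..).1 hy
  obtain ⟨r0, hz0, hzW⟩ := (evalFrom_append_some ..).1 hz
  obtain ⟨x', y', z', hx', hy', hz', hxy', hyz', lx, ly, lz⟩ :=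
    short_triple M hx0 hy0 hz0 hxy hyz hne
  obtain ⟨w1, δ, t, ⟨u, v, b⟩, rfl, hδ, hlen, e1, e2, e3⟩ :=
    exists_loop (prodDFA M (prodDFA M M)) (q := (p0, q0, r0)) (q' := (p, q, r)) (s := W)
      (by rw [prod_eval, prod_eval]; exact ⟨hxW, hyW, hzW⟩)
      (by simp; calc _ = n ^ 3 := by ring
            _ ≤ _ := hW)
  rw [prod_eval, prod_eval] at e1 e2 e3
  simp only [Fintype.card_prod, Fintype.card_fin] at hlen
  have hδ' := List.length_pos_iff.2 hδ
  -- the power of `δ`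
  set m := n ^ 2 + n + w1.length with hm
  have hlow : m < (wpow δ (m / δ.length + 1)).length := by
    rw [length_wpow, mul_comm]
    exact Nat.lt_mul_div_succ m hδ'
  have hup : (wpow δ (m / δ.length + 1)).length ≤ n ^ 3 + 2 * n ^ 2 + n + 2 := by
    rw [length_wpow, add_mul, one_mul]
    have := Nat.div_mul_le_self m δ.length
    have e : n * (n * n) = n ^ 3 := by ring
    have : n ^ 2 ≤ 2 * n ^ 2 := by omega
    omega
  have loop : ∀ k : ℕ, M.evalFrom u (wpow δ k) = some u ∧ M.evalFrom v (wpow δ k) = some v ∧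
      M.evalFrom b (wpow δ k) = some b := fun k =>
    ⟨evalFrom_wpow _ _ _ e2.1 k, evalFrom_wpow _ _ _ e2.2.1 k, evalFrom_wpow _ _ _ e2.2.2 k⟩
  obtain ⟨lu, lv, lb⟩ := loop (m / δ.length + 1)
  generalize wpow δ (m / δ.length + 1) = γ at *
  have ex : M.evalFrom M.init (x' ++ w1) = some u := (evalFrom_append_some ..).2 ⟨_, hx', e1.1⟩
  have ey : M.evalFrom M.init (y' ++ w1) = some v := (evalFrom_append_some ..).2 ⟨_, hy', e1.2.1⟩
  have ez : M.evalFrom M.init (z' ++ w1) = some b := (evalFrom_append_some ..).2 ⟨_, hz', e1.2.2⟩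
  have hns : ∀ a : List A, a.length < γ.length → ¬ γ <:+ a := fun a ha hs =>
    absurd hs.length_le (by omega)
  have LX : (x' ++ w1).length < γ.length := by simp; omega
  have LY : (y' ++ w1).length < γ.length := by simp; omega
  have LZ : (z' ++ w1).length < γ.length := by simp; omega
  have transfer : ∀ (a a' : List A) (c d : Fin n), M.evalFrom M.init a = some c →
      M.evalFrom M.init a' = some c →
      rc M.accepts (a ++ (w1 ++ δ ++ t)) = rc M.accepts (a' ++ w1 ++ (δ ++ t)) := by
    intro a a' c d h h'
    apply rc_eq_of_eval
    simp only [List.append_assoc]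
    rw [evalFrom_append, evalFrom_append M M.init a', h, h']
  have tx := transfer x x' p0 p hx0 hx'
  have ty := transfer y y' q0 q hy0 hy'
  have tz := transfer z z' r0 r hz0 hz'
  have CXY := (colex_append_iff x' y' w1).2 hxy'
  have CYZ := (colex_append_iff y' z' w1).2 hyz'
  rcases colex_total (x := y' ++ w1) (y := γ) (by intro h; rw [h] at LY; omega) with hc | hc
  · refine ⟨x' ++ w1, y' ++ w1, γ, u, v, hns _ LX, hns _ LY, ex, ey, ?_, lu, lv,
      Or.inl ⟨colex_trans CXY hc, hc⟩, LX.le, LY.le, hup⟩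
    intro h
    apply h1
    rw [tx, ty]
    exact rc_append h _
  · refine ⟨y' ++ w1, z' ++ w1, γ, v, b, hns _ LY, hns _ LZ, ey, ez, ?_, lv, lb,
      Or.inr ⟨hc, colex_trans hc CYZ⟩, LY.le, LZ.le, hup⟩
    intro h
    apply h2
    rw [ty, tz]
    exact rc_append h _

/-! ## Witnesses imply non-Wheelerness -/

theorem wheeler_mono {A Q : Type} [LinearOrder A] (N : PDFA A Q) (r : Q → Q → Prop)
    (hN : IsWheelerOrder N r) (α β : List A) (p q : Q) (hα : N.evalFrom N.init α = some p)
    (hβ : N.evalFrom N.init β = some q) (hlt : Colex α β) : r p q ∨ p = q := by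
  obtain ⟨-, hmin, -, hW⟩ := hN
  induction α using List.reverseRecOn generalizing β p q with
  | nil =>
    simp [PDFA.evalFrom] at hα
    subst hα
    by_cases h : q = N.init
    · exact Or.inr h.symm
    · exact Or.inl (hmin q h)
  | append_singleton α a ih =>
    induction β using List.reverseRecOn with
    | nil =>
      rw [colex_iff] at hlt
      exact absurd hlt (List.not_lt_nil _)
    | append_singleton β b _ =>
      obtain ⟨p', hp', hp⟩ := (evalFrom_append_some ..).1 hα
      obtain ⟨q', hq', hq⟩ := (evalFrom_append_some ..).1 hβ
      rw [evalFrom_single] at hp hq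
      have hw := hW _ _ _ _ _ _ hp hq
      rw [colex_iff] at hlt
      simp only [List.reverse_append, List.reverse_singleton, List.singleton_append,
        List.cons_lt_cons_iff] at hlt
      rcases hlt with hlt | ⟨rfl, hlt⟩
      · exact Or.inl (hw.1 hlt)
      · rcases ih β p' q' hp' hq' hlt with h | rfl
        · exact hw.2 rfl h
        · right
          rw [hp] at hq
          exact Option.some.inj hq

theorem not_wheeler_chain {A : Type} [LinearOrder A] (L : Set (List A)) (hL : IsWheelerLang L)
    (f g : ℕ → List A) (hf : ∀ i, f i ∈ Pref L) (hg : ∀ i, g i ∈ Pref L)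
    (hne : ∀ i, rc L (f i) ≠ rc L (g i)) (hne' : ∀ i, rc L (g i) ≠ rc L (f (i + 1)))
    (h : (∀ i, Colex (f i) (g i) ∧ Colex (g i) (f (i + 1))) ∨
      (∀ i, Colex (g i) (f i) ∧ Colex (f (i + 1)) (g i))) : False := by
  obtain ⟨m, N, r, hN, rfl⟩ := hL
  have hso : IsStrictTotalOrder (Fin m) r := hN.1
  choose s hs using fun i => eval_of_pref N (hf i)
  choose t ht using fun i => eval_of_pref N (hg i)
  have n1 : ∀ i, s i ≠ t i := fun i h0 => hne i (rc_eq_of_eval N (by rw [hs, ht, h0]))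
  have n2 : ∀ i, t i ≠ s (i + 1) := fun i h0 => hne' i (rc_eq_of_eval N (by rw [hs, ht, h0]))
  have hinj : Function.Injective s := by
    rcases h with h | h
    · have hstep : ∀ i, r (s i) (s (i + 1)) := fun i =>
        _root_.trans
          ((wheeler_mono N r hN _ _ _ _ (hs i) (ht i) (h i).1).resolve_right (n1 i))
          ((wheeler_mono N r hN _ _ _ _ (ht i) (hs (i + 1)) (h i).2).resolve_right (n2 i))
      have hall := Nat.rel_of_forall_rel_succ_of_lt r hstep
      intro i j hij
      rcases lt_trichotomy i j with hlt | rfl | hlt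
      · have := hall hlt; rw [hij] at this; exact absurd this (irrefl _)
      · rfl
      · have := hall hlt; rw [hij] at this; exact absurd this (irrefl _)
    · have hstep : ∀ i, Function.swap r (s i) (s (i + 1)) := fun i =>
        _root_.trans (r := r)
          ((wheeler_mono N r hN _ _ _ _ (hs (i + 1)) (ht i) (h i).2).resolve_right
            (fun h0 => n2 i h0.symm))
          ((wheeler_mono N r hN _ _ _ _ (ht i) (hs i) (h i).1).resolve_right
            (fun h0 => n1 i h0.symm))
      have hall := Nat.rel_of_forall_rel_succ_of_lt (Function.swap r) hstep
      intro i j hij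
      rcases lt_trichotomy i j with hlt | rfl | hlt
      · have := hall hlt; rw [hij] at this; exact absurd this (irrefl (r := r) _)
      · rfl
      · have := hall hlt; rw [hij] at this; exact absurd this (irrefl (r := r) _)
  exact not_injective_infinite_finite s hinj

theorem not_wheeler_of_witness {A : Type} [LinearOrder A] {n : ℕ}
    (M : PDFA A (Fin n)) (htrim : M.Trim) (μ ν γ : List A) (u v : Fin n)
    (h1 : ¬ γ <:+ μ) (h2 : ¬ γ <:+ ν)
    (hu : M.evalFrom M.init μ = some u) (hv : M.evalFrom M.init ν = some v)
    (hne : rc M.accepts μ ≠ rc M.accepts ν)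
    (lu : M.evalFrom u γ = some u) (lv : M.evalFrom v γ = some v)
    (h : (Colex μ γ ∧ Colex ν γ) ∨ (Colex γ μ ∧ Colex γ ν)) :
    ¬ IsWheelerLang M.accepts := by
  intro hW
  have eμ : ∀ i, M.evalFrom M.init (μ ++ wpow γ i) = some u := fun i =>
    (evalFrom_append_some ..).2 ⟨u, hu, evalFrom_wpow _ _ _ lu i⟩
  have eν : ∀ i, M.evalFrom M.init (ν ++ wpow γ i) = some v := fun i =>
    (evalFrom_append_some ..).2 ⟨v, hv, evalFrom_wpow _ _ _ lv i⟩
  have rμ : ∀ i, rc M.accepts (μ ++ wpow γ i) = rc M.accepts μ := fun i =>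
    rc_eq_of_eval M (by rw [eμ, hu])
  have rν : ∀ i, rc M.accepts (ν ++ wpow γ i) = rc M.accepts ν := fun i =>
    rc_eq_of_eval M (by rw [eν, hv])
  have step1 : ∀ a b : List A, Colex b (a ++ γ) →
      ∀ i, Colex (b ++ wpow γ i) (a ++ wpow γ (i + 1)) := by
    intro a b hab i
    have : a ++ wpow γ (i + 1) = (a ++ γ) ++ wpow γ i := by simp [wpow]
    rw [this, colex_append_iff]
    exact hab
  have step2 : ∀ a b : List A, Colex (a ++ γ) b →
      ∀ i, Colex (a ++ wpow γ (i + 1)) (b ++ wpow γ i) := by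
    intro a b hab i
    have : a ++ wpow γ (i + 1) = (a ++ γ) ++ wpow γ i := by simp [wpow]
    rw [this, colex_append_iff]
    exact hab
  have pμ := fun i => pref_of_eval M htrim (eμ i)
  have pν := fun i => pref_of_eval M htrim (eν i)
  have hne0 : μ ≠ ν := by rintro rfl; exact hne rfl
  have F1 := not_wheeler_chain _ hW (fun i => μ ++ wpow γ i) (fun i => ν ++ wpow γ i) pμ pν
    (fun i => by simpa only [rμ, rν] using hne) (fun i => by simpa only [rμ, rν] using hne.symm)
  have F2 := not_wheeler_chain _ hW (fun i => ν ++ wpow γ i) (fun i => μ ++ wpow γ i) pν pμ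
    (fun i => by simpa only [rμ, rν] using hne.symm) (fun i => by simpa only [rμ, rν] using hne)
  rcases h with ⟨a1, a2⟩ | ⟨a1, a2⟩ <;> rcases colex_total hne0 with c | c
  · exact F1 (Or.inl fun i => ⟨(colex_append_iff ..).2 c,
      step1 _ _ (colex_append_of_colex _ a2) i⟩)
  · exact F2 (Or.inl fun i => ⟨(colex_append_iff ..).2 c,
      step1 _ _ (colex_append_of_colex _ a1) i⟩)
  · exact F2 (Or.inr fun i => ⟨(colex_append_iff ..).2 c,
      step2 _ _ (append_colex_of_colex _ a1 h1) i⟩)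
  · exact F1 (Or.inr fun i => ⟨(colex_append_iff ..).2 c,
      step2 _ _ (append_colex_of_colex _ a2 h2) i⟩)

end Helpers2

section Helpers3

/-! ## Construction of a Wheeler DFA -/

theorem wheelerLang_of_finite {A Q : Type} [LinearOrder A] [Finite Q] (M : PDFA A Q)
    (r : Q → Q → Prop) (h : IsWheelerOrder M r) : IsWheelerLang M.accepts := by
  obtain ⟨k, ⟨e⟩⟩ := Finite.exists_equiv_fin Q
  let N : PDFA A (Fin k) :=
    { init := e M.init
      trans := fun q a => (M.trans (e.symm q) a).map e
      accept := fun q => M.accept (e.symm q) }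
  have htr : ∀ q a q', N.trans q a = some q' ↔ M.trans (e.symm q) a = some (e.symm q') := by
    intro q a q'
    simp only [N, Option.map_eq_some_iff]
    constructor
    · rintro ⟨x, hx, rfl⟩
      simpa using hx
    · intro h0
      exact ⟨_, h0, by simp⟩
  have hev : ∀ (w : List A) (q : Q), N.evalFrom (e q) w = (M.evalFrom q w).map e := by
    intro w
    induction w with
    | nil => intro q; rfl
    | cons a w ih =>
      intro q
      simp only [PDFA.evalFrom, N, Equiv.symm_apply_apply]
      cases hq : M.trans q a with
      | none => rfl
      | some q' => exact ih q'
  refine ⟨k, N, fun x y => r (e.symm x) (e.symm y), ⟨?_, ?_, ?_, ?_⟩, ?_⟩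
  · have hso := h.1
    exact
      { trichotomous := fun a b h1 h2 =>
          e.symm.injective (hso.toTrichotomous.trichotomous _ _ h1 h2)
        irrefl := fun a => irrefl (r := r) _
        trans := fun a b c => _root_.trans (r := r) }
  · intro q hq
    have := h.2.1 (e.symm q) (by intro h0; apply hq; simp [N, ← h0])
    simpa [N] using this
  · intro q a h0
    rw [htr] at h0
    exact h.2.2.1 (e.symm q) a (by simpa [N] using h0)
  · intro u₁ a₁ v₁ u₂ a₂ v₂ h1 h2
    rw [htr] at h1 h2
    have := h.2.2.2 _ _ _ _ _ _ h1 h2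
    simpa using this
  · ext w
    simp only [PDFA.accepts, Set.mem_ofPred_eq]
    have h0 : N.evalFrom N.init w = (M.evalFrom M.init w).map e := hev w M.init
    rw [h0]
    simp only [Option.map_eq_some_iff]
    constructor
    · rintro ⟨q, ⟨x, hx, rfl⟩, ha⟩
      exact ⟨x, hx, by simpa [N] using ha⟩
    · rintro ⟨x, hx, ha⟩
      exact ⟨e x, ⟨x, hx, rfl⟩, by simpa [N] using ha⟩

theorem equivC_iff {A : Type} [LinearOrder A] (L : Set (List A)) (α β : List A) :
    EquivC L α β ↔ rc L α = rc L β ∧ α.getLast? = β.getLast? ∧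
      ∀ γ ∈ Pref L, ((α.reverse ≤ γ.reverse ∧ γ.reverse ≤ β.reverse) ∨
        (β.reverse ≤ γ.reverse ∧ γ.reverse ≤ α.reverse)) → rc L γ = rc L α := by
  simp only [EquivC, colexLE_iff]

theorem equivC_symm {A : Type} [LinearOrder A] {L : Set (List A)} {α β : List A}
    (h : EquivC L α β) : EquivC L β α := by
  rw [equivC_iff] at *
  exact ⟨h.1.symm, h.2.1.symm, fun γ hγ hb => (h.2.2 γ hγ hb.symm).trans h.1⟩

theorem equivC_trans {A : Type} [LinearOrder A] {L : Set (List A)} {α β γ : List A}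
    (h : EquivC L α β) (h' : EquivC L β γ) : EquivC L α γ := by
  rw [equivC_iff] at *
  refine ⟨h.1.trans h'.1, h.2.1.trans h'.2.1, fun δ hδ hb => ?_⟩
  have k1 := h.2.2 δ hδ
  have k2 := fun x => (h'.2.2 δ hδ x).trans h.1.symm
  rcases le_total δ.reverse β.reverse with c | c <;> rcases hb with hb | hb
  · exact k1 (Or.inl ⟨hb.1, c⟩)
  · exact k2 (Or.inr ⟨hb.1, c⟩)
  · exact k2 (Or.inl ⟨c, hb.2⟩)
  · exact k1 (Or.inr ⟨c, hb.2⟩)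

theorem equivC_refl {A : Type} [LinearOrder A] (L : Set (List A)) (α : List A) :
    EquivC L α α := by
  rw [equivC_iff]
  refine ⟨rfl, rfl, fun γ _ hb => ?_⟩
  have : γ.reverse = α.reverse := by
    rcases hb with hb | hb <;> exact le_antisymm hb.2 hb.1
  rw [List.reverse_inj.1 this]

/-- classes are convex -/
theorem equivC_convex {A : Type} [LinearOrder A] {L : Set (List A)} {α β γ : List A}
    (h : EquivC L α β) (hγ : γ ∈ Pref L) (h1 : α.reverse ≤ γ.reverse)
    (h2 : γ.reverse ≤ β.reverse) : EquivC L γ β := by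
  rw [equivC_iff] at *
  have hr := h.2.2 γ hγ (Or.inl ⟨h1, h2⟩)
  refine ⟨hr.trans h.1, ?_, fun δ hδ hb => ?_⟩
  · have := head_between h1 h2 (by simpa using h.2.1)
    simpa using this
  · rw [hr]
    refine h.2.2 δ hδ (Or.inl ?_)
    rcases hb with hb | hb
    · exact ⟨h1.trans hb.1, hb.2⟩
    · exact ⟨h1.trans (h2.trans hb.1), hb.2.trans h2⟩

/-- right invariance -/
theorem equivC_right {A : Type} [LinearOrder A] {L : Set (List A)} {α β : List A}
    (h : EquivC L α β) (a : A) : EquivC L (α ++ [a]) (β ++ [a]) := by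
  rw [equivC_iff] at *
  refine ⟨rc_append h.1 _, by simp, fun γ hγ hb => ?_⟩
  have hl : γ.getLast? = some a := by
    rcases hb with hb | hb
    · have := head_between hb.1 hb.2 (by simp)
      simpa using this
    · have := head_between hb.1 hb.2 (by simp)
      simpa using this
  obtain ⟨δ, rfl⟩ := List.getLast?_eq_some_iff.1 hl
  have key : ∀ x y : List A, (x ++ [a]).reverse ≤ (y ++ [a]).reverse ↔ x.reverse ≤ y.reverse := by
    intro x y
    rw [← not_lt, ← not_lt]
    exact not_congr (colex_append_iff y x [a])
  simp only [key] at hb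
  exact rc_append (h.2.2 δ (pref_of_append hγ) hb) _

/-- The setoid `≡^c_L` on prefixes. -/
def cSetoid {A : Type} [LinearOrder A] (L : Set (List A)) : Setoid {α : List A // α ∈ Pref L} where
  r := fun α β => EquivC L α.1 β.1
  iseqv := ⟨fun _ => equivC_refl _ _, equivC_symm, equivC_trans⟩

open Classical in
/-- The quotient automaton. -/
noncomputable def cDFA {A : Type} [LinearOrder A] (L : Set (List A)) (h0 : [] ∈ Pref L) :
    PDFA A (Quotient (cSetoid L)) where
  init := Quotient.mk _ ⟨[], h0⟩
  trans := fun q a =>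
    if h : q.out.1 ++ [a] ∈ Pref L then some (Quotient.mk _ ⟨q.out.1 ++ [a], h⟩) else none
  accept := fun q => q.out.1 ∈ L

theorem out_equiv {A : Type} [LinearOrder A] {L : Set (List A)} {α : List A} (h : α ∈ Pref L) :
    EquivC L (Quotient.mk (cSetoid L) ⟨α, h⟩).out.1 α :=
  Quotient.mk_out (s := cSetoid L) ⟨α, h⟩

theorem cDFA_eval {A : Type} [LinearOrder A] (L : Set (List A)) (h0 : [] ∈ Pref L)
    (α : List A) (q : Quotient (cSetoid L)) :
    (cDFA L h0).evalFrom (cDFA L h0).init α = some q ↔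
      ∃ h : α ∈ Pref L, q = Quotient.mk _ ⟨α, h⟩ := by
  induction α using List.reverseRecOn generalizing q with
  | nil =>
    simp only [PDFA.evalFrom, Option.some.injEq]
    exact ⟨fun h => ⟨h0, h.symm⟩, fun ⟨_, h⟩ => h.symm⟩
  | append_singleton α a ih =>
    simp only [evalFrom_append_some, evalFrom_single, ih]
    constructor
    · rintro ⟨p, ⟨hα, rfl⟩, htr⟩
      simp only [cDFA] at htr
      split_ifs at htr with hp
      have he := equivC_right (out_equiv hα) a
      have hαa : α ++ [a] ∈ Pref L := by
        rw [pref_iff_rc, ← he.1]; exact hp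
      refine ⟨hαa, ?_⟩
      rw [← Option.some.inj htr]
      exact Quotient.sound (s := cSetoid L) he
    · rintro ⟨hαa, rfl⟩
      have hα := pref_of_append hαa
      have he := equivC_right (out_equiv hα) a
      refine ⟨_, ⟨hα, rfl⟩, ?_⟩
      have hp : (Quotient.mk (cSetoid L) ⟨α, hα⟩).out.1 ++ [a] ∈ Pref L := by
        rw [pref_iff_rc, he.1]; exact hαa
      simp only [cDFA]
      rw [dif_pos hp]
      congr 1
      exact Quotient.sound (s := cSetoid L) he

theorem cDFA_accepts {A : Type} [LinearOrder A] (L : Set (List A)) (h0 : [] ∈ Pref L) :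
    (cDFA L h0).accepts = L := by
  have mem_iff : ∀ α, α ∈ L ↔ [] ∈ rc L α := by intro α; simp [rc]
  ext α
  simp only [PDFA.accepts, Set.mem_ofPred_eq, cDFA_eval]
  constructor
  · rintro ⟨q, ⟨h, rfl⟩, ha⟩
    have ha' : (Quotient.mk (cSetoid L) ⟨α, h⟩).out.1 ∈ L := ha
    rw [mem_iff, (out_equiv h).1, ← mem_iff] at ha'
    exact ha'
  · intro hα
    have h : α ∈ Pref L := ⟨[], by simpa using hα⟩
    refine ⟨_, ⟨h, rfl⟩, ?_⟩
    change (Quotient.mk (cSetoid L) ⟨α, h⟩).out.1 ∈ L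
    rw [mem_iff, (out_equiv h).1, ← mem_iff]
    exact hα

theorem out_lt {A : Type} [LinearOrder A] {L : Set (List A)} {α β : List A} (hα : α ∈ Pref L)
    (hβ : β ∈ Pref L) (hlt : Colex α β) :
    Colex (Quotient.mk (cSetoid L) ⟨α, hα⟩).out.1 (Quotient.mk (cSetoid L) ⟨β, hβ⟩).out.1 ∨
      Quotient.mk (cSetoid L) ⟨α, hα⟩ = Quotient.mk (cSetoid L) ⟨β, hβ⟩ := by
  have e1 := out_equiv hα
  have e2 := out_equiv hβ
  have m2 := (Quotient.mk (cSetoid L) ⟨β, hβ⟩).out.2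
  by_contra! hcon
  obtain ⟨hnlt, hne⟩ := hcon
  apply hne
  apply Quotient.sound (s := cSetoid L)
  change EquivC L α β
  generalize (Quotient.mk (cSetoid L) ⟨α, hα⟩).out.1 = x at *
  generalize (Quotient.mk (cSetoid L) ⟨β, hβ⟩).out.1 = y at *
  rw [colex_iff] at hlt hnlt
  have hyx := not_lt.1 hnlt
  rcases le_or_gt y.reverse α.reverse with c | c
  · exact equivC_convex e2 hα c hlt.le
  · have := equivC_convex (equivC_symm e1) m2 c.le hyx
    exact equivC_trans (equivC_symm e1) (equivC_trans (equivC_symm this) e2)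

theorem cDFA_wheeler {A : Type} [LinearOrder A] (L : Set (List A)) (h0 : [] ∈ Pref L) :
    IsWheelerOrder (cDFA L h0) (fun p q => Colex p.out.1 q.out.1) := by
  have htr : ∀ u a v, (cDFA L h0).trans u a = some v →
      ∃ h : u.out.1 ++ [a] ∈ Pref L, v = Quotient.mk _ ⟨u.out.1 ++ [a], h⟩ := by
    intro u a v h
    simp only [cDFA] at h
    split_ifs at h with hp
    exact ⟨hp, (Option.some.inj h).symm⟩
  have hinit : (cDFA L h0).init.out.1 = [] := by
    have := (out_equiv h0).2.1
    exact List.getLast?_eq_none_iff.1 this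
  have hinj : ∀ p q : Quotient (cSetoid L), p.out.1 = q.out.1 → p = q := fun p q h =>
    Quotient.out_injective (Subtype.ext h)
  refine ⟨?_, ?_, ?_, ?_⟩
  · exact
      { trichotomous := fun p q h1 h2 => by
          apply hinj
          by_contra hne
          rcases colex_total hne with h | h
          · exact h1 h
          · exact h2 h
        irrefl := fun p h => colex_irrefl h
        trans := fun p q s => colex_trans }
  · intro q hq
    have hne : (cDFA L h0).init.out.1 ≠ q.out.1 := fun h => hq (hinj _ _ h.symm)
    refine (colex_total hne).resolve_right ?_
    rw [hinit, colex_iff]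
    exact List.not_lt_nil _
  · intro q a h
    obtain ⟨hp, he⟩ := htr _ _ _ h
    have := (out_equiv hp).2.1
    rw [← he, hinit] at this
    simp at this
  · intro u₁ a₁ v₁ u₂ a₂ v₂ h1 h2
    obtain ⟨p1, rfl⟩ := htr _ _ _ h1
    obtain ⟨p2, rfl⟩ := htr _ _ _ h2
    refine ⟨fun hlt => ?_, ?_⟩
    · have c : Colex [a₁] [a₂] := by
        rw [colex_iff]; simp [List.cons_lt_cons_iff, hlt]
      refine colex_of_last c (by simpa using hlt.ne) ?_ ?_
      · rw [(out_equiv p1).2.1]; simp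
      · rw [(out_equiv p2).2.1]; simp
    · rintro rfl hlt
      exact out_lt p1 p2 ((colex_append_iff ..).2 hlt)

/-- If there is no ordered alternating triple with a long common suffix then `L` is Wheeler. -/
theorem wheeler_of_no_triple {A : Type} [Fintype A] [LinearOrder A] {n : ℕ}
    (M : PDFA A (Fin n)) (htrim : M.Trim) (K : ℕ) (hK : 0 < K)
    (hno : ∀ (x y z w : List A), K ≤ w.length → x ++ w ∈ Pref M.accepts →
      y ++ w ∈ Pref M.accepts → z ++ w ∈ Pref M.accepts → Colex x y → Colex y z →
      rc M.accepts (x ++ w) ≠ rc M.accepts (y ++ w) →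
      rc M.accepts (y ++ w) ≠ rc M.accepts (z ++ w) → False) :
    IsWheelerLang M.accepts := by
  set L := M.accepts with hL
  have h0 : [] ∈ Pref L := pref_of_eval M htrim (q := M.init) rfl
  -- one direction of the interval condition
  have key : ∀ α β : List A, α ∈ Pref L → β ∈ Pref L → rc L α = rc L β →
      α.reverse.take K = β.reverse.take K → ∀ γ ∈ Pref L,
      α.reverse ≤ γ.reverse → γ.reverse ≤ β.reverse → rc L γ = rc L α := by
    intro α β hα hβ hr hs γ hγ l1 l2
    rcases l1.eq_or_lt with e | l1
    · rw [List.reverse_inj.1 e]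
    rcases l2.eq_or_lt with e | l2
    · rw [List.reverse_inj.1 e, hr]
    by_contra hne
    have dα : α = (α.reverse.drop K).reverse ++ (α.reverse.take K).reverse := by
      rw [← List.reverse_append, List.take_append_drop, List.reverse_reverse]
    have dβ : β = (β.reverse.drop K).reverse ++ (α.reverse.take K).reverse := by
      rw [hs, ← List.reverse_append, List.take_append_drop, List.reverse_reverse]
    have hlen : (α.reverse.take K).length = K := by
      by_contra hlt
      have hlt' : (α.reverse.take K).length < K := by
        have := List.length_take_le K α.reverse
        omega
      have a1 : α.reverse.take K = α.reverse := by
        apply List.take_of_length_le; simp at hlt' ⊢; omega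
      rw [hs] at hlt'
      have a2 : β.reverse.take K = β.reverse := by
        apply List.take_of_length_le; simp at hlt' ⊢; omega
      rw [a1, a2] at hs
      rw [hs] at l1
      exact lt_asymm l1 l2
    generalize (α.reverse.drop K).reverse = x at dα
    generalize (β.reverse.drop K).reverse = z at dβ
    generalize α.reverse.take K = w at *
    subst dα dβ
    simp only [List.reverse_append, List.reverse_reverse] at l1 l2
    obtain ⟨y, hy⟩ := prefix_between w l1 l2
    have dγ : γ = y.reverse ++ w.reverse := by
      rw [← List.reverse_append, ← hy, List.reverse_reverse]
    subst dγ
    rw [List.reverse_append, List.reverse_reverse, List.reverse_reverse, append_left_lt_iff]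
      at l1 l2
    refine hno x y.reverse z w.reverse (by simp [hlen]) hα hγ hβ ?_ ?_ (fun h => hne h.symm)
      (fun h => hne (h.trans hr.symm))
    · rw [colex_iff, List.reverse_reverse]; exact l1
    · rw [colex_iff, List.reverse_reverse]; exact l2
  have hlast : ∀ α β : List A, α.reverse.take K = β.reverse.take K →
      α.getLast? = β.getLast? := by
    intro α β h
    have := congrArg List.head? h
    rw [List.head?_take, List.head?_take, if_neg hK.ne', if_neg hK.ne'] at this
    simpa using this
  choose st hst using fun α : {α : List A // α ∈ Pref L} => eval_of_pref M α.2
  have : Finite {l : List A // l.length ≤ K} := (List.finite_length_le A K).to_subtype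
  let data : Quotient (cSetoid L) → {l : List A // l.length ≤ K} × Fin n := fun q =>
    (⟨q.out.1.reverse.take K, List.length_take_le _ _⟩, st q.out)
  have hinj : Function.Injective data := by
    intro p q hpq
    simp only [data, Prod.mk.injEq, Subtype.mk.injEq] at hpq
    obtain ⟨e1, e2⟩ := hpq
    have hr : rc L p.out.1 = rc L q.out.1 := rc_eq_of_eval M (by rw [hst, hst, e2])
    have : EquivC L p.out.1 q.out.1 := by
      rw [equivC_iff]
      refine ⟨hr, hlast _ _ e1, fun γ hγ hb => ?_⟩
      rcases hb with hb | hb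
      · exact key _ _ p.out.2 q.out.2 hr e1 γ hγ hb.1 hb.2
      · exact (key _ _ q.out.2 p.out.2 hr.symm e1.symm γ hγ hb.1 hb.2).trans hr.symm
    rw [← Quotient.out_eq p, ← Quotient.out_eq q]
    exact Quotient.sound (s := cSetoid L) this
  have : Finite (Quotient (cSetoid L)) := Finite.of_injective data hinj
  have := wheelerLang_of_finite (cDFA L h0) _ (cDFA_wheeler L h0)
  rwa [cDFA_accepts] at this

theorem bounded_witness {A : Type} [Fintype A] [LinearOrder A] {n : ℕ}
    (M : PDFA A (Fin n)) (htrim : M.Trim) (h : ¬ IsWheelerLang M.accepts) :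
    ∃ (μ ν γ : List A) (u v : Fin n),
        ¬ γ <:+ μ ∧ ¬ γ <:+ ν ∧
        M.evalFrom M.init μ = some u ∧ M.evalFrom M.init ν = some v ∧
        rc M.accepts μ ≠ rc M.accepts ν ∧
        M.evalFrom u γ = some u ∧ M.evalFrom v γ = some v ∧
        ((Colex μ γ ∧ Colex ν γ) ∨ (Colex γ μ ∧ Colex γ ν)) ∧
        μ.length ≤ γ.length ∧ ν.length ≤ γ.length ∧
        γ.length ≤ n ^ 3 + 2 * n ^ 2 + n + 2 := by
  by_contra hcon
  apply h
  have hn : 0 < n := M.init.pos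
  refine wheeler_of_no_triple M htrim (n ^ 3) (by positivity) ?_
  intro x y z w hw hx hy hz hxy hyz h1 h2
  obtain ⟨p, hp⟩ := eval_of_pref M hx
  obtain ⟨q, hq⟩ := eval_of_pref M hy
  obtain ⟨r, hr⟩ := eval_of_pref M hz
  exact hcon (witness_of_triple M x y z w p q r hw hp hq hr hxy hyz h1 h2)

end Helpers3

section Statement0

/-- Theorem 3 of the paper: characterization of
non-Wheelerness of the language of a trim DFA, with bounds on the witnesses. -/
theorem statement0 {A : Type} [Fintype A] [LinearOrder A] {n : ℕ}
    (M : PDFA A (Fin n)) (htrim : M.Trim)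
    (L : Set (List A)) (hL : L = M.accepts) :
    (¬ IsWheelerLang L ↔
      ∃ (μ ν γ : List A) (u v : Fin n),
        ¬ γ <:+ μ ∧ ¬ γ <:+ ν ∧
        M.evalFrom M.init μ = some u ∧ M.evalFrom M.init ν = some v ∧
        rc L μ ≠ rc L ν ∧
        M.evalFrom u γ = some u ∧ M.evalFrom v γ = some v ∧
        ((Colex μ γ ∧ Colex ν γ) ∨ (Colex γ μ ∧ Colex γ ν))) ∧
    (¬ IsWheelerLang L →
      ∃ (μ ν γ : List A) (u v : Fin n),
        ¬ γ <:+ μ ∧ ¬ γ <:+ ν ∧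
        M.evalFrom M.init μ = some u ∧ M.evalFrom M.init ν = some v ∧
        rc L μ ≠ rc L ν ∧
        M.evalFrom u γ = some u ∧ M.evalFrom v γ = some v ∧
        ((Colex μ γ ∧ Colex ν γ) ∨ (Colex γ μ ∧ Colex γ ν)) ∧
        μ.length ≤ γ.length ∧ ν.length ≤ γ.length ∧
        γ.length ≤ n ^ 3 + 2 * n ^ 2 + n + 2) := by
  subst hL
  refine ⟨⟨fun h => ?_, ?_⟩, bounded_witness M htrim⟩
  · obtain ⟨μ, ν, γ, u, v, a1, a2, a3, a4, a5, a6, a7, a8, -⟩ := bounded_witness M htrim h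
    exact ⟨μ, ν, γ, u, v, a1, a2, a3, a4, a5, a6, a7, a8⟩
  · rintro ⟨μ, ν, γ, u, v, a1, a2, a3, a4, a5, a6, a7, a8⟩
    exact not_wheeler_of_witness M htrim μ ν γ u v a1 a2 a3 a4 a5 a6 a7 a8

end Statement0

end WheelerPaper
end

section
/- Let a, b be two distinct symbols and let L₀ = {a(aba)^n a : n ≥ 0} ∪ {ba(aba)^n b : n ≥ 0} over {a,b}. Then for every n ≥ 0: (1) a(aba)^n is a proper suffix of ba(aba)^n, and ba(aba)^n is a proper suffix of a(aba)^{n+1}; (2) (a(aba)^n)⁻¹L₀ ≠ (ba(aba)^n)⁻¹L₀; indeed a(aba)^n·a ∈ L₀ while ba(aba)^n·a ∉ L₀. -/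
/-!
Common framework: words over an ordered alphabet, co-lexicographic order,
(partial) DFAs and NFAs, Wheeler automata and Wheeler languages,
following "Ordering regular languages: a danger zone".
-/

namespace WheelerPaper

section Statement5

/-- combinatorial facts about the witness words for the
language `L₀ = a(aba)*a + ba(aba)*b`: suffix relations and distinct right
contexts. -/
theorem statement5 {A : Type} (a b : A) (hab : a ≠ b)
    (L : Set (List A))
    (hL : L = {w | ∃ n : ℕ, w = [a] ++ wpow [a, b, a] n ++ [a]} ∪
              {w | ∃ n : ℕ, w = [b, a] ++ wpow [a, b, a] n ++ [b]}) :
    ∀ n : ℕ,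
      (([a] ++ wpow [a, b, a] n) <:+ ([b, a] ++ wpow [a, b, a] n) ∧
        [a] ++ wpow [a, b, a] n ≠ [b, a] ++ wpow [a, b, a] n) ∧
      (([b, a] ++ wpow [a, b, a] n) <:+ ([a] ++ wpow [a, b, a] (n + 1)) ∧
        [b, a] ++ wpow [a, b, a] n ≠ [a] ++ wpow [a, b, a] (n + 1)) ∧
      rc L ([a] ++ wpow [a, b, a] n) ≠ rc L ([b, a] ++ wpow [a, b, a] n) ∧
      ([a] ++ wpow [a, b, a] n ++ [a]) ∈ L ∧
      ([b, a] ++ wpow [a, b, a] n ++ [a]) ∉ L := by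
  intro n
  have h1 : ([a] ++ wpow [a, b, a] n ++ [a]) ∈ L := by
    rw [hL]; exact Or.inl ⟨n, rfl⟩
  have h2 : ([b, a] ++ wpow [a, b, a] n ++ [a]) ∉ L := by
    rw [hL]
    rintro (⟨m, hm⟩ | ⟨m, hm⟩)
    · simp only [List.cons_append, List.cons.injEq] at hm
      exact hab hm.1.symm
    · have h := congrArg List.getLast? hm
      simp only [List.getLast?_append, List.getLast?_singleton, Option.some_or,
        Option.some.injEq] at h
      exact hab h
  refine ⟨⟨⟨[b], rfl⟩, ?_⟩, ⟨⟨[a, a], rfl⟩, ?_⟩, ?_, h1, h2⟩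
  · intro h
    simp only [List.cons_append, List.cons.injEq] at h
    exact hab h.1
  · intro h
    simp only [List.cons_append, List.cons.injEq] at h
    exact hab h.1.symm
  · intro h
    have h3 : [a] ∈ rc L ([a] ++ wpow [a, b, a] n) := h1
    rw [h] at h3
    exact h2 h3

end Statement5

end WheelerPaper
end

section
/- Let Σ be a finite alphabet, L ⊆ Σ* a language with ε ∈ L, and let c be a symbol not in Σ. Then L = Σ* if and only if (L·{c})*·L = (Σ ∪ {c})*, where both sides are languages over the alphabet Σ ∪ {c}. -/
/-!
Common framework: words over an ordered alphabet, co-lexicographic order,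
(partial) DFAs and NFAs, Wheeler automata and Wheeler languages,
following "Ordering regular languages: a danger zone".
-/

namespace WheelerPaper

section Statement6

open Computability

/-- equation (1) of the paper: for `ε ∈ L ⊆ Σ*` and `c ∉ Σ`,
`L = Σ*` iff `(L·c)*·L = (Σ ∪ {c})*`. -/
theorem statement6 {A : Type} [Fintype A] (S : Set A) (c : A) (hc : c ∉ S)
    (L : Language A) (hsub : ∀ w ∈ L, ∀ x ∈ w, x ∈ S) (heps : [] ∈ L) :
    L = wordsOver S ↔ (L * {[c]})∗ * L = wordsOver (S ∪ {c}) := by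
  have hcs : ∀ y, y ∈ L * ({[c]} : Language A) ↔ ∃ a ∈ L, a ++ [c] = y := by
    intro y
    rw [Language.mem_mul]
    constructor
    · rintro ⟨a, ha, b, hb, rfl⟩
      have hb' : b = [c] := hb
      exact ⟨a, ha, by rw [hb']⟩
    · rintro ⟨a, ha, rfl⟩
      exact ⟨a, ha, [c], rfl, rfl⟩
  have hmem : ∀ w, w ∈ (L * ({[c]} : Language A))∗ * L ↔
      ∃ l : List (List A), (∀ y ∈ l, ∃ a ∈ L, a ++ [c] = y) ∧ ∃ v ∈ L, l.flatten ++ v = w := by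
    intro w
    rw [Language.mem_mul]
    constructor
    · rintro ⟨u, hu, v, hv, rfl⟩
      obtain ⟨l, rfl, hl⟩ := Language.mem_kstar.1 hu
      exact ⟨l, fun y hy => (hcs y).1 (hl y hy), v, hv, rfl⟩
    · rintro ⟨l, hl, v, hv, rfl⟩
      exact ⟨_, Language.mem_kstar.2 ⟨l, rfl, fun y hy => (hcs y).2 (hl y hy)⟩, v, hv, rfl⟩
  constructor
  · intro hL
    have hL' : ∀ w, w ∈ L ↔ ∀ x ∈ w, x ∈ S := by
      intro w
      rw [hL]
      exact Iff.rfl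
    refine Set.ext fun w => ?_
    refine (hmem w).trans ?_
    change _ ↔ ∀ x ∈ w, x ∈ S ∪ {c}
    constructor
    · rintro ⟨l, hl, v, hv, rfl⟩ x hx
      rcases List.mem_append.1 hx with h | h
      · obtain ⟨y, hy, hxy⟩ := List.mem_flatten.1 h
        obtain ⟨a, ha, rfl⟩ := hl y hy
        rcases List.mem_append.1 hxy with h | h
        · exact Or.inl (hsub a ha x h)
        · exact Or.inr (by simpa using h)
      · exact Or.inl (hsub v hv x h)
    · induction w with
      | nil => exact fun _ => ⟨[], by simp, [], heps, rfl⟩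
      | cons x w ih =>
        intro h
        obtain ⟨l, hl, v, hv, rfl⟩ := ih fun y hy => h y (List.mem_cons_of_mem _ hy)
        rcases h x List.mem_cons_self with hx | hx
        · cases l with
          | nil =>
            refine ⟨[], by simp, x :: v, ?_, rfl⟩
            rw [hL'] at hv ⊢
            exact List.forall_mem_cons.2 ⟨hx, hv⟩
          | cons y l =>
            obtain ⟨hy, hl2⟩ := List.forall_mem_cons.1 hl
            obtain ⟨a, ha, rfl⟩ := hy
            refine ⟨((x :: a) ++ [c]) :: l,
              List.forall_mem_cons.2 ⟨⟨x :: a, ?_, rfl⟩, hl2⟩, v, hv, by simp⟩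
            rw [hL'] at ha ⊢
            exact List.forall_mem_cons.2 ⟨hx, ha⟩
        · have hx' : x = c := hx
          subst hx'
          exact ⟨[x] :: l, List.forall_mem_cons.2 ⟨⟨[], heps, rfl⟩, hl⟩, v, hv, by simp⟩
  · intro hX
    refine Set.ext fun w => ⟨fun hw => hsub w hw, fun hw => ?_⟩
    have hw0 : ∀ x ∈ w, x ∈ S := hw
    have hw' : w ∈ wordsOver (S ∪ {c}) := fun x hx => Or.inl (hw0 x hx)
    rw [← hX, hmem] at hw'
    obtain ⟨l, hl, v, hv, rfl⟩ := hw'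
    cases l with
    | nil => exact hv
    | cons y l =>
      obtain ⟨a, ha, rfl⟩ := hl y List.mem_cons_self
      exact absurd (hw0 c (by simp)) hc

end Statement6

end WheelerPaper
end
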